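/- arXiv:1805.08346 — 5 statements merged into one kernel-verified Lean document; each statement's English description precedes it below -/
import Mathlib

section
/- Let X and Y be metric spaces, u : [0,∞) → X and v : [0,∞) → Y arbitrary functions, and A ⊆ X. Set L⁺(u) = {p ∈ X : there is a sequence tₙ → +∞ with u(tₙ) → p} and L⁺(v) = {p ∈ Y : there is a sequence tₙ → +∞ with v(tₙ) → p}, and let Ω = L⁺(u) ∩ A. Assume Ω ≠ ∅ and that for every sequence (tₙ) in [0,∞) with tₙ → +∞ such that (u(tₙ)) converges to a point of Ω, the sequence (v(tₙ)) converges in Y. Then there exists a continuous map h : Ω → L⁺(v) such that for every q ∈ Ω and every sequence (tₙ) with tₙ → +∞ and u(tₙ) → q, one has v(tₙ) → h(q). -/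
/-!
For `q` in `Ω` and `l = atTop` (or any countably generated filter of times), `l ⊓ comap u (𝓝 q)` is
the filter of times `t → ∞` with `u t → q`. Alternating between two sequences that tend to it gives
a third one, so the hypothesis forces the limits of `v` along all such sequences to agree; as the
filter is countably generated, `v` converges along it, and `h q` is the limit. Continuity is the
argument for extension by continuity into a regular space: a closed neighborhood `V` of `h q`
contains `v t` for all late `t` with `u t` in some open `U ∋ q`, hence contains `h p` for every
`p ∈ U ∩ Ω`.
-/

open Filter Topology
open scoped NNReal

/-- The positive limit set of a function `w : [0,∞) → Z`. -/
def fLimitSet {Z : Type*} [MetricSpace Z] (w : ℝ≥0 → Z) : Set Z :=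
  {p | ∃ t : ℕ → ℝ≥0, Tendsto t atTop atTop ∧
    Tendsto (fun n => w (t n)) atTop (𝓝 p)}

section LimitsAlongSequences

variable {α Y : Type*} [TopologicalSpace Y] [R1Space Y] {F : Filter α} {v : α → Y}

lemma inseparable_of_forall_seq_exists_tendsto
    (hF : ∀ t : ℕ → α, Tendsto t atTop F → ∃ y, Tendsto (fun n => v (t n)) atTop (𝓝 y))
    {a b : ℕ → α} (ha : Tendsto a atTop F) (hb : Tendsto b atTop F) {y z : Y}
    (hy : Tendsto (fun n => v (a n)) atTop (𝓝 y))
    (hz : Tendsto (fun n => v (b n)) atTop (𝓝 z)) : Inseparable y z := by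
  obtain ⟨w, hw⟩ := hF (fun n => if Even n then a n else b n) (ha.if' hb)
  have even_atTop : Tendsto (fun n : ℕ => 2 * n) atTop atTop :=
    tendsto_id.const_mul_atTop' two_pos
  have odd_atTop : Tendsto (fun n : ℕ => 2 * n + 1) atTop atTop :=
    (tendsto_add_atTop_nat 1).comp even_atTop
  have hyw : Inseparable y w :=
    tendsto_nhds_unique_inseparable (hy.comp even_atTop)
      ((hw.comp even_atTop).congr fun n => by simp)
  have hzw : Inseparable z w :=
    tendsto_nhds_unique_inseparable (hz.comp odd_atTop)
      ((hw.comp odd_atTop).congr fun n => by simp)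
  exact hyw.trans hzw.symm

lemma exists_tendsto_of_forall_seq_exists_tendsto [F.NeBot] [F.IsCountablyGenerated]
    (hF : ∀ t : ℕ → α, Tendsto t atTop F → ∃ y, Tendsto (fun n => v (t n)) atTop (𝓝 y)) :
    ∃ y, Tendsto v F (𝓝 y) := by
  obtain ⟨a, ha⟩ := F.exists_seq_tendsto
  obtain ⟨y, hy⟩ := hF a ha
  refine ⟨y, tendsto_of_seq_tendsto fun t ht => ?_⟩
  obtain ⟨z, hz⟩ := hF t ht
  rwa [(inseparable_of_forall_seq_exists_tendsto hF ha ht hy hz).nhds_eq]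

end LimitsAlongSequences

section InfComapNhds

variable {α X Y : Type*} [TopologicalSpace X] [TopologicalSpace Y] {l : Filter α} {u : α → X}
  {v : α → Y}

lemma mapClusterPt_iff_neBot_inf_comap_nhds {x : X} :
    MapClusterPt x l u ↔ (l ⊓ comap u (𝓝 x)).NeBot := by
  rw [neBot_inf_comap_iff_map, inf_comm, mapClusterPt_def, ClusterPt]

lemma mapClusterPt_iff_exists_seq [FirstCountableTopology X] [l.IsCountablyGenerated] {x : X} :
    MapClusterPt x l u ↔
      ∃ t : ℕ → α, Tendsto t atTop l ∧ Tendsto (fun n => u (t n)) atTop (𝓝 x) :=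
  ⟨fun hx => hx.exists_seq_tendsto.imp fun _ => And.symm,
    fun ⟨_, ht, hut⟩ => .of_comp ht hut.mapClusterPt⟩

lemma tendsto_inf_comap_nhds_iff {β : Type*} {m : Filter β} {t : β → α} {x : X} :
    Tendsto t m (l ⊓ comap u (𝓝 x)) ↔ Tendsto t m l ∧ Tendsto (fun n => u (t n)) m (𝓝 x) := by
  rw [tendsto_inf, tendsto_comap_iff, Function.comp_def]

lemma eventually_nhds_eventually_inf_comap_nhds {p : α → Prop} {x : X}
    (hp : ∀ᶠ t in l ⊓ comap u (𝓝 x), p t) :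
    ∀ᶠ x' in 𝓝 x, ∀ᶠ t in l ⊓ comap u (𝓝 x'), p t := by
  obtain ⟨⟨s, U⟩, ⟨hs, hxU, hU⟩, hsU⟩ :=
    (l.basis_sets.inf ((nhds_basis_opens x).comap u)).eventually_iff.1 hp
  filter_upwards [hU.mem_nhds hxU] with x' hx'
  exact mem_of_superset (inter_mem_inf hs (preimage_mem_comap (hU.mem_nhds hx'))) hsU

lemma continuousOn_of_tendsto_inf_comap_nhds [RegularSpace Y] {Ω : Set X} {h : X → Y}
    (hΩ : ∀ q ∈ Ω, MapClusterPt q l u)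
    (hlim : ∀ q ∈ Ω, Tendsto v (l ⊓ comap u (𝓝 q)) (𝓝 (h q))) : ContinuousOn h Ω := by
  intro q hq
  refine (closed_nhds_basis (h q)).tendsto_right_iff.2 fun V ⟨hV, hVclosed⟩ => ?_
  have hvV : ∀ᶠ p in 𝓝 q, ∀ᶠ t in l ⊓ comap u (𝓝 p), v t ∈ V :=
    eventually_nhds_eventually_inf_comap_nhds (hlim q hq hV)
  filter_upwards [mem_nhdsWithin_of_mem_nhds hvV, self_mem_nhdsWithin] with p hp hpΩ
  have := mapClusterPt_iff_neBot_inf_comap_nhds.1 (hΩ p hpΩ)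
  exact hVclosed.mem_of_tendsto (hlim p hpΩ) hp

end InfComapNhds

lemma fLimitSet_eq_setOf_mapClusterPt {Z : Type*} [MetricSpace Z] (w : ℝ≥0 → Z) :
    fLimitSet w = {p | MapClusterPt p atTop w} :=
  Set.ext fun _ => mapClusterPt_iff_exists_seq.symm

theorem stmt_1_general {α X Y : Type*} [TopologicalSpace X] [FirstCountableTopology X]
    [TopologicalSpace Y] [RegularSpace Y] [Nonempty Y] {l : Filter α} [l.IsCountablyGenerated]
    {u : α → X} {v : α → Y} {Ω : Set X} (hΩ : ∀ q ∈ Ω, MapClusterPt q l u)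
    (hconv : ∀ t : ℕ → α, Tendsto t atTop l →
      (∃ p ∈ Ω, Tendsto (fun n => u (t n)) atTop (𝓝 p)) →
      ∃ q : Y, Tendsto (fun n => v (t n)) atTop (𝓝 q)) :
    ∃ h : X → Y, ContinuousOn h Ω ∧ Set.MapsTo h Ω {y | MapClusterPt y l v} ∧
      ∀ q ∈ Ω, ∀ t : ℕ → α, Tendsto t atTop l →
        Tendsto (fun n => u (t n)) atTop (𝓝 q) →
        Tendsto (fun n => v (t n)) atTop (𝓝 (h q)) := by
  have hneBot : ∀ q ∈ Ω, (l ⊓ comap u (𝓝 q)).NeBot := fun q hq =>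
    mapClusterPt_iff_neBot_inf_comap_nhds.1 (hΩ q hq)
  have hlim : ∀ q ∈ Ω, ∃ y, Tendsto v (l ⊓ comap u (𝓝 q)) (𝓝 y) := fun q hq => by
    have := hneBot q hq
    refine exists_tendsto_of_forall_seq_exists_tendsto fun t ht => ?_
    obtain ⟨htl, hut⟩ := tendsto_inf_comap_nhds_iff.1 ht
    exact hconv t htl ⟨q, hq, hut⟩
  choose! h hh using hlim
  refine ⟨h, continuousOn_of_tendsto_inf_comap_nhds hΩ hh, fun q hq => ?_,
    fun q hq t htl hut => (hh q hq).comp (tendsto_inf_comap_nhds_iff.2 ⟨htl, hut⟩)⟩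
  have := hneBot q hq
  exact (hh q hq).mapClusterPt.mono inf_le_left

/-- If `Ω = L⁺(u) ∩ A` is nonempty and `v(tₙ)` converges for every sequence
`tₙ → +∞` with `u(tₙ)` converging to a point of `Ω`, then there is a continuous map
`h : Ω → L⁺(v)` with `v(tₙ) → h(q)` whenever `tₙ → +∞` and `u(tₙ) → q ∈ Ω`. -/
theorem stmt_1 {X Y : Type*} [MetricSpace X] [MetricSpace Y]
    (u : ℝ≥0 → X) (v : ℝ≥0 → Y) (A : Set X)
    (hne : (fLimitSet u ∩ A).Nonempty)
    (hconv : ∀ t : ℕ → ℝ≥0, Tendsto t atTop atTop →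
      (∃ p ∈ fLimitSet u ∩ A, Tendsto (fun n => u (t n)) atTop (𝓝 p)) →
      ∃ q : Y, Tendsto (fun n => v (t n)) atTop (𝓝 q)) :
    ∃ h : X → Y, ContinuousOn h (fLimitSet u ∩ A) ∧
      Set.MapsTo h (fLimitSet u ∩ A) (fLimitSet v) ∧
      ∀ q ∈ fLimitSet u ∩ A, ∀ t : ℕ → ℝ≥0, Tendsto t atTop atTop →
        Tendsto (fun n => u (t n)) atTop (𝓝 q) →
        Tendsto (fun n => v (t n)) atTop (𝓝 (h q)) := by
  have : Nonempty Y := ⟨v 0⟩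
  simp only [fLimitSet_eq_setOf_mapClusterPt] at hconv ⊢
  exact stmt_1_general (fun _ hq => hq.1) hconv
end

section
/- Let (X,π) and (Y,σ) be semidynamical systems on metric spaces, x ∈ X and y ∈ Y with L⁺(x) ≠ ∅. If 𝓛ₓ^∞ = 𝓛_y^∞ (as collections of sequences), then there exists a homeomorphism h : L⁺(x) → L⁺(y) such that h(π(q,t)) = σ(h(q),t) for every q ∈ L⁺(x) and every t ≥ 0; in particular the limit sets L⁺(x) and L⁺(y) are topologically conjugate. -/
/-!
Fix a limit point `p` of the orbit of `x`. If two sequences of times going to infinity both bring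
this orbit to `p`, then so does the sequence obtained by interleaving them. Hence the orbit of `y`
converges along the interleaved sequence, and so has the same limit along both. Calling this limit
`h p`, the orbit of `y` tends to `h p` along the filter of all large times at which the orbit of `x`
is near `p`. Continuity of `h` is then that of any extension by continuity into a regular space,
exchanging `x` and `y` gives the inverse of `h`, and translating times by `s` shows that `h`
intertwines the two flows at time `s`.
-/

open Filter Topology
open scoped NNReal

/-- `π` is a semidynamical system on the metric space `Z`. -/
def IsSDS {Z : Type*} [MetricSpace Z] (π : Z → ℝ≥0 → Z) : Prop :=
  Continuous (fun p : Z × ℝ≥0 => π p.1 p.2) ∧ (∀ z, π z 0 = z) ∧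
    ∀ z t s, π (π z t) s = π z (t + s)

/-- The positive limit set of a point `x` under `π`. -/
def limitSet {Z : Type*} [MetricSpace Z] (π : Z → ℝ≥0 → Z) (x : Z) : Set Z :=
  {p | ∃ t : ℕ → ℝ≥0, Tendsto t atTop atTop ∧
    Tendsto (fun n => π x (t n)) atTop (𝓝 p)}

/-- The filter of indices tending to `l` while `f` tends to `p`. For an orbit map `f` it describes
all the ways in which the orbit can converge to `p`; it is trivial when `p` is not a limit point of
`f`. -/
def approach {τ X : Type*} [TopologicalSpace X] (l : Filter τ) (f : τ → X) (p : X) : Filter τ :=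
  comap f (𝓝 p) ⊓ l

/-- `h` sends limits of `f` to limits of `g`: whenever `f` tends to `p`, `g` tends to `h p`. The
value of `h` at a point which is not a limit point of `f` is arbitrary, because `approach l f p` is
then trivial. -/
def IsLimitMap {τ X Y : Type*} [TopologicalSpace X] [TopologicalSpace Y] (l : Filter τ)
    (f : τ → X) (g : τ → Y) (h : X → Y) : Prop :=
  ∀ p, Tendsto g (approach l f p) (𝓝 (h p))

section Approach

variable {τ X : Type*} [TopologicalSpace X] {l : Filter τ} {f : τ → X} {p : X}

lemma approach_neBot_iff : (approach l f p).NeBot ↔ MapClusterPt p l f := by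
  rw [approach, neBot_inf_comap_iff_map', mapClusterPt_def, ClusterPt]

lemma tendsto_approach_iff {α : Type*} {k : Filter α} {t : α → τ} :
    Tendsto t k (approach l f p) ↔ Tendsto (fun a => f (t a)) k (𝓝 p) ∧ Tendsto t k l := by
  rw [approach, tendsto_inf, tendsto_comap_iff, Function.comp_def]

lemma tendsto_approach : Tendsto f (approach l f p) (𝓝 p) :=
  (tendsto_approach_iff.1 tendsto_id).1

lemma eventually_eventually_approach {P : τ → Prop} (hP : ∀ᶠ a in approach l f p, P a) :
    ∀ᶠ q in 𝓝 p, ∀ᶠ a in approach l f q, P a := by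
  have basis (q : X) := ((nhds_basis_opens q).comap f).inf l.basis_sets
  obtain ⟨⟨U, A⟩, ⟨⟨hpU, hU⟩, hA⟩, hUA⟩ := (basis p).eventually_iff.1 hP
  filter_upwards [hU.mem_nhds hpU] with q hqU
  exact (basis q).eventually_iff.2 ⟨(U, A), ⟨⟨hqU, hU⟩, hA⟩, hUA⟩

instance [FirstCountableTopology X] [l.IsCountablyGenerated] :
    (approach l f p).IsCountablyGenerated :=
  inferInstanceAs (comap f (𝓝 p) ⊓ l).IsCountablyGenerated

end Approach

lemma exists_tendsto_interleave {α : Type*} {k : Filter α} {t u : ℕ → α}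
    (ht : Tendsto t atTop k) (hu : Tendsto u atTop k) :
    ∃ w : ℕ → α, Tendsto w atTop k ∧ (∀ n, w (2 * n) = t n) ∧ ∀ n, w (2 * n + 1) = u n := by
  have half : Tendsto (fun n : ℕ => n / 2) atTop atTop :=
    Nat.tendsto_div_const_atTop two_ne_zero
  refine ⟨fun n => if Even n then t (n / 2) else u (n / 2),
    Tendsto.if' (ht.comp half) (hu.comp half), fun n => ?_, fun n => ?_⟩
  · simp
  · simp [Nat.mul_add_div]

lemma exists_tendsto_nhds_of_seq {α Y : Type*} [TopologicalSpace Y] [T2Space Y] [Nonempty Y]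
    {k : Filter α} [k.IsCountablyGenerated] {g : α → Y}
    (hg : ∀ t : ℕ → α, Tendsto t atTop k → ∃ q, Tendsto (fun n => g (t n)) atTop (𝓝 q)) :
    ∃ q, Tendsto g k (𝓝 q) := by
  rcases k.eq_or_neBot with rfl | _
  · exact ⟨Classical.arbitrary Y, tendsto_bot⟩
  obtain ⟨t, ht⟩ := exists_seq_tendsto k
  obtain ⟨q, hq⟩ := hg t ht
  refine ⟨q, tendsto_of_seq_tendsto fun u hu => ?_⟩
  obtain ⟨w, hw, w_even, w_odd⟩ := exists_tendsto_interleave ht hu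
  obtain ⟨r, hr⟩ := hg w hw
  have tendsto_even : Tendsto (fun n => g (t n)) atTop (𝓝 r) := by
    simpa only [Function.comp_def, w_even] using
      hr.comp (tendsto_atTop_mono (fun n => by lia : ∀ n, n ≤ 2 * n) tendsto_id)
  have tendsto_odd : Tendsto (fun n => g (u n)) atTop (𝓝 r) := by
    simpa only [Function.comp_def, w_odd] using
      hr.comp (tendsto_atTop_mono (fun n => by lia : ∀ n, n ≤ 2 * n + 1) tendsto_id)
  rwa [tendsto_nhds_unique hq tendsto_even]

section IsLimitMap

variable {τ X Y : Type*} [TopologicalSpace X] [TopologicalSpace Y] {l : Filter τ}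
  {f : τ → X} {g : τ → Y} {h : X → Y} {p : X}

lemma exists_isLimitMap [FirstCountableTopology X] [T2Space Y] [Nonempty Y]
    [l.IsCountablyGenerated]
    (hfg : ∀ t : ℕ → τ, Tendsto t atTop l →
      (∃ p, Tendsto (fun n => f (t n)) atTop (𝓝 p)) →
        ∃ q, Tendsto (fun n => g (t n)) atTop (𝓝 q)) :
    ∃ h, IsLimitMap l f g h := by
  refine Classical.skolem.1 fun p => exists_tendsto_nhds_of_seq fun t ht => ?_
  obtain ⟨hft, htl⟩ := tendsto_approach_iff.1 ht
  exact hfg t htl ⟨p, hft⟩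

namespace IsLimitMap

lemma continuousOn [RegularSpace Y] (hh : IsLimitMap l f g h) :
    ContinuousOn h {p | MapClusterPt p l f} := by
  intro p _
  refine (closed_nhds_basis (h p)).tendsto_right_iff.2 fun V ⟨hV, hV_closed⟩ => ?_
  have near_p : ∀ᶠ q in 𝓝 p, ∀ᶠ a in approach l f q, g a ∈ V :=
    eventually_eventually_approach ((hh p).eventually_mem hV)
  filter_upwards [nhdsWithin_le_nhds near_p, self_mem_nhdsWithin] with q hq hq_cluster
  have := approach_neBot_iff.2 hq_cluster
  exact hV_closed.mem_of_tendsto (hh q) hq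

lemma mapClusterPt (hh : IsLimitMap l f g h) (hp : MapClusterPt p l f) :
    MapClusterPt (h p) l g :=
  have := approach_neBot_iff.2 hp
  (hh p).mapClusterPt.mono inf_le_right

lemma apply_apply [T2Space X] {h' : Y → X} (hh : IsLimitMap l f g h) (hh' : IsLimitMap l g f h')
    (hp : MapClusterPt p l f) : h' (h p) = p := by
  have := approach_neBot_iff.2 hp
  have approach_le : approach l f p ≤ approach l g (h p) :=
    tendsto_approach_iff.2 ⟨hh p, inf_le_right⟩
  exact tendsto_nhds_unique ((hh' (h p)).mono_left approach_le) tendsto_approach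

lemma map_eq [T2Space Y] (hh : IsLimitMap l f g h) {S : τ → τ} {F : X → X} {G : Y → Y}
    (hS : Tendsto S l l) (hF : Function.Semiconj f S F) (hG : Function.Semiconj g S G)
    (hF_cont : ContinuousAt F p) (hG_cont : ContinuousAt G (h p)) (hp : MapClusterPt p l f) :
    h (F p) = G (h p) := by
  have := approach_neBot_iff.2 hp
  have tendsto_S : Tendsto S (approach l f p) (approach l f (F p)) := by
    refine tendsto_approach_iff.2 ⟨?_, hS.mono_left inf_le_right⟩
    simpa only [hF.eq, Function.comp_def] using hF_cont.tendsto.comp tendsto_approach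
  have tendsto_left : Tendsto (g ∘ S) (approach l f p) (𝓝 (h (F p))) := (hh (F p)).comp tendsto_S
  have tendsto_right : Tendsto (G ∘ g) (approach l f p) (𝓝 (G (h p))) :=
    hG_cont.tendsto.comp (hh p)
  exact tendsto_nhds_unique (hG.comp_eq ▸ tendsto_left) tendsto_right

end IsLimitMap

end IsLimitMap

theorem stmt_4_general {τ X Y : Type*} [TopologicalSpace τ] [AddMonoid τ]
    [TopologicalSpace X] [FirstCountableTopology X] [T3Space X]
    [TopologicalSpace Y] [FirstCountableTopology Y] [T3Space Y]
    (ϕ : Flow τ X) (ψ : Flow τ Y) {l : Filter τ} [l.IsCountablyGenerated]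
    (hl : ∀ s, Tendsto (s + ·) l l) (x : X) (y : Y)
    (heq : ∀ t : ℕ → τ, Tendsto t atTop l →
      ((∃ p, Tendsto (fun n => ϕ (t n) x) atTop (𝓝 p)) ↔
        ∃ q, Tendsto (fun n => ψ (t n) y) atTop (𝓝 q))) :
    ∃ h : X → Y, ∃ g : Y → X,
      ContinuousOn h (omegaLimit l ϕ {x}) ∧ ContinuousOn g (omegaLimit l ψ {y}) ∧
      Set.MapsTo h (omegaLimit l ϕ {x}) (omegaLimit l ψ {y}) ∧
      Set.MapsTo g (omegaLimit l ψ {y}) (omegaLimit l ϕ {x}) ∧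
      Set.LeftInvOn g h (omegaLimit l ϕ {x}) ∧ Set.LeftInvOn h g (omegaLimit l ψ {y}) ∧
      ∀ q ∈ omegaLimit l ϕ {x}, ∀ s, h (ϕ s q) = ψ s (h q) := by
  have : Nonempty X := ⟨x⟩
  have : Nonempty Y := ⟨y⟩
  obtain ⟨h, hh⟩ := exists_isLimitMap (f := (ϕ · x)) (g := (ψ · y)) fun t ht => (heq t ht).1
  obtain ⟨g, hg⟩ := exists_isLimitMap (f := (ψ · y)) (g := (ϕ · x)) fun t ht => (heq t ht).2
  have omegaLimit_x : omegaLimit l ϕ {x} = {p | MapClusterPt p l (ϕ · x)} :=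
    Set.ext (mem_omegaLimit_singleton_iff_mapClusterPt l ϕ x)
  have omegaLimit_y : omegaLimit l ψ {y} = {q | MapClusterPt q l (ψ · y)} :=
    Set.ext (mem_omegaLimit_singleton_iff_mapClusterPt l ψ y)
  rw [omegaLimit_x, omegaLimit_y]
  exact ⟨h, g, hh.continuousOn, hg.continuousOn, fun _ => hh.mapClusterPt,
    fun _ => hg.mapClusterPt, fun _ => hh.apply_apply hg, fun _ => hg.apply_apply hh,
    fun q hq s => hh.map_eq (hl s) (ϕ.map_add s · x) (ψ.map_add s · y)
      (ϕ.continuous_toFun s).continuousAt (ψ.continuous_toFun s).continuousAt hq⟩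

section IsSDS

variable {Z : Type*} [MetricSpace Z] {π : Z → ℝ≥0 → Z}

/-- A semidynamical system as a Mathlib flow of the monoid `ℝ≥0`, whose time argument comes
first. -/
def IsSDS.toFlow (hπ : IsSDS π) : Flow ℝ≥0 Z where
  toFun t z := π z t
  cont' := hπ.1.comp continuous_swap
  map_add' t s z := by rw [hπ.2.2, add_comm]
  map_zero' := hπ.2.1

lemma IsSDS.limitSet_eq_omegaLimit (hπ : IsSDS π) (x : Z) :
    limitSet π x = omegaLimit atTop hπ.toFlow {x} := by
  ext p
  rw [mem_omegaLimit_singleton_iff_mapClusterPt]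
  constructor
  · rintro ⟨t, ht, hp⟩
    exact hp.mapClusterPt.of_comp ht
  · intro hp
    obtain ⟨t, hp, ht⟩ := hp.exists_seq_tendsto
    exact ⟨t, ht, hp⟩

end IsSDS

/-- if `𝓛ₓ^∞ = 𝓛_y^∞` then the limit sets `L⁺(x)` and `L⁺(y)` are
topologically conjugate: there is a homeomorphism `h` between them (given together with
its continuous inverse `g`) intertwining the flows. -/
theorem stmt_4 {X Y : Type*} [MetricSpace X] [MetricSpace Y]
    (π : X → ℝ≥0 → X) (σ : Y → ℝ≥0 → Y) (hπ : IsSDS π) (hσ : IsSDS σ)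
    (x : X) (y : Y)
    (hne : (limitSet π x).Nonempty)
    (heq : ∀ t : ℕ → ℝ≥0, Tendsto t atTop atTop →
      ((∃ p : X, Tendsto (fun n => π x (t n)) atTop (𝓝 p)) ↔
       (∃ q : Y, Tendsto (fun n => σ y (t n)) atTop (𝓝 q)))) :
    ∃ h : X → Y, ∃ g : Y → X,
      ContinuousOn h (limitSet π x) ∧ ContinuousOn g (limitSet σ y) ∧
      Set.MapsTo h (limitSet π x) (limitSet σ y) ∧
      Set.MapsTo g (limitSet σ y) (limitSet π x) ∧
      (∀ q ∈ limitSet π x, g (h q) = q) ∧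
      (∀ p ∈ limitSet σ y, h (g p) = p) ∧
      (∀ q ∈ limitSet π x, ∀ s : ℝ≥0, h (π q s) = σ (h q) s) := by
  rw [hπ.limitSet_eq_omegaLimit, hσ.limitSet_eq_omegaLimit]
  exact stmt_4_general hπ.toFlow hσ.toFlow
    (fun _ => tendsto_atTop_mono (fun _ => le_add_self) tendsto_id) x y heq
end

section
/- Let (X,π) be a semidynamical system on a metric space and x ∈ X. Then the set P_x is positively invariant: if z ∈ P_x and s ≥ 0, then π(z,s) ∈ P_x. -/
/-!
A limit point `p = lim π x (t n)` flows to `π p s = lim π x (t n + s)`, so limit sets are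
positively invariant; moreover `L⁺(π z s) = L⁺(z)`, since only late times matter. If `z` tracks `x`
with time change `g`, then `π z s` should track `x` with time change `g t - s`. This is negative
for small `t`, but it agrees for large `t` with a homeomorphism of `[0,∞)` fixing `0`.
-/

open Filter Topology
open scoped NNReal

/-- The set `P_x`: points `z ∈ L⁺(x) ∩ L⁺(z)` whose motion tracks that of `x` up to a
time reparametrization (a homeomorphism `g` of `[0,∞)` with `g 0 = 0`). -/
def Pset {Z : Type*} [MetricSpace Z] (π : Z → ℝ≥0 → Z) (x : Z) : Set Z :=
  {z | z ∈ limitSet π x ∧ z ∈ limitSet π z ∧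
    ∃ g : ℝ≥0 ≃ₜ ℝ≥0, g 0 = 0 ∧
      Tendsto (fun t : ℝ≥0 => dist (π x t) (π z (g t))) atTop (𝓝 0)}

section TimeChange

section Semiring

variable {R : Type*} [Semiring R] [LinearOrder R] [IsStrictOrderedRing R] [CanonicallyOrderedAdd R]

lemma min_add_one_mul_of_le_one (s : R) {v : R} (hv : v ≤ 1) :
    min ((s + 1) * v) (v + s) = (s + 1) * v := by
  rw [min_eq_left_iff, add_mul, one_mul, add_comm]
  gcongr
  exact mul_le_of_le_one_right' hv

lemma min_add_one_mul_of_one_le (s : R) {v : R} (hv : 1 ≤ v) :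
    min ((s + 1) * v) (v + s) = v + s := by
  rw [min_eq_right_iff, add_mul, one_mul, add_comm]
  gcongr
  exact le_mul_of_one_le_right' hv

lemma strictMono_min_add_one_mul (s : R) : StrictMono fun v : R => min ((s + 1) * v) (v + s) :=
  fun _ _ huv => min_lt_min (mul_lt_mul_of_pos_left huv (by positivity)) (by gcongr)

end Semiring

variable {K : Type*} [Semifield K] [LinearOrder K] [IsStrictOrderedRing K] [CanonicallyOrderedAdd K]

lemma surjective_min_add_one_mul (s : K) :
    Function.Surjective fun v : K => min ((s + 1) * v) (v + s) := by
  intro u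
  have hs : 0 < s + 1 := by positivity
  rcases le_total u (s + 1) with hu | hu
  · refine ⟨u / (s + 1), ?_⟩
    dsimp only
    rw [min_add_one_mul_of_le_one s ((div_le_one hs).2 hu), mul_div_cancel₀ u hs.ne']
  · obtain ⟨v, rfl⟩ := exists_add_of_le (le_self_add.trans hu)
    exact ⟨v, (min_add_one_mul_of_one_le s (by simpa using hu)).trans (add_comm v s)⟩

/-- The order isomorphism, on time values such as `ℝ≥0`, which is multiplication by `s + 1` up to
time `1` and translation by `s` from then on; the minimum of the two formulas selects the right one
on each piece. It replaces the translation by `s`, which is not onto. -/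
noncomputable def eventualShift (s : K) : K ≃o K :=
  (strictMono_min_add_one_mul s).orderIsoOfSurjective _ (surjective_min_add_one_mul s)

lemma eventualShift_apply_of_one_le (s : K) {v : K} (hv : 1 ≤ v) : eventualShift s v = v + s :=
  min_add_one_mul_of_one_le s hv

lemma eventually_eventualShift_symm_add (s : K) :
    ∀ᶠ u in atTop, (eventualShift s).symm u + s = u := by
  filter_upwards [(eventualShift s).symm.tendsto_atTop.eventually_ge_atTop 1] with u hu
  rw [← eventualShift_apply_of_one_le s hu, OrderIso.apply_symm_apply]

end TimeChange

lemma tendsto_atTop_of_isClosedEmbedding {α β : Type*}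
    [LinearOrder α] [NoMaxOrder α] [TopologicalSpace α] [ClosedIciTopology α]
    [LinearOrder β] [OrderBot β] [TopologicalSpace β] [CompactIccSpace β]
    {f : α → β} (hf : IsClosedEmbedding f) : Tendsto f atTop atTop :=
  (hf.tendsto_cocompact.mono_left atTop_le_cocompact).mono_right cocompact_le_atTop

lemma exists_homeomorph_eventually_add_eq (g : ℝ≥0 ≃ₜ ℝ≥0) (hg : g 0 = 0) (s : ℝ≥0) :
    ∃ h : ℝ≥0 ≃ₜ ℝ≥0, h 0 = 0 ∧ ∀ᶠ t in atTop, h t + s = g t := by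
  refine ⟨g.trans (eventualShift s).symm.toHomeomorph, ?_,
    (tendsto_atTop_of_isClosedEmbedding g.isClosedEmbedding).eventually
      (eventually_eventualShift_symm_add s)⟩
  simpa [hg] using (eventualShift s).symm.map_bot

namespace IsSDS

variable {X : Type*} [MetricSpace X] {π : X → ℝ≥0 → X}

lemma continuous_left (hπ : IsSDS π) (s : ℝ≥0) : Continuous fun x => π x s :=
  hπ.1.comp (Continuous.prodMk_left s)

lemma map_map (hπ : IsSDS π) (x : X) (t s : ℝ≥0) : π (π x t) s = π x (t + s) :=
  hπ.2.2 x t s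

lemma map_mem_limitSet (hπ : IsSDS π) {x p : X} (hp : p ∈ limitSet π x) (s : ℝ≥0) :
    π p s ∈ limitSet π x := by
  obtain ⟨t, ht, hxt⟩ := hp
  refine ⟨fun n => t n + s, tendsto_atTop_mono (fun _ => le_self_add) ht, ?_⟩
  simpa only [Function.comp_def, hπ.map_map] using ((hπ.continuous_left s).tendsto p).comp hxt

lemma limitSet_map (hπ : IsSDS π) (x : X) (s : ℝ≥0) : limitSet π (π x s) = limitSet π x := by
  ext p
  constructor
  · rintro ⟨t, ht, hxt⟩
    refine ⟨fun n => s + t n, tendsto_atTop_mono (fun _ => le_add_self) ht, ?_⟩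
    simpa only [hπ.map_map] using hxt
  · rintro ⟨t, ht, hxt⟩
    refine ⟨fun n => t n - s, tendsto_atTop.2 fun b => ?_, hxt.congr' ?_⟩
    · filter_upwards [ht.eventually_ge_atTop (b + s)] with n hn using le_tsub_of_add_le_right hn
    · filter_upwards [ht.eventually_ge_atTop s] with n hn
      rw [hπ.map_map, add_tsub_cancel_of_le hn]

end IsSDS

/-- `P_x` is positively invariant. -/
theorem stmt_8 {X : Type*} [MetricSpace X]
    (π : X → ℝ≥0 → X) (hπ : IsSDS π) (x : X) :
    ∀ z ∈ Pset π x, ∀ s : ℝ≥0, π z s ∈ Pset π x := by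
  rintro z ⟨hzx, hzz, g, hg0, hg⟩ s
  have hsz : π z s ∈ limitSet π (π z s) := by
    rw [hπ.limitSet_map]
    exact hπ.map_mem_limitSet hzz s
  obtain ⟨h, hh0, hhg⟩ := exists_homeomorph_eventually_add_eq g hg0 s
  refine ⟨hπ.map_mem_limitSet hzx s, hsz, h, hh0, hg.congr' ?_⟩
  filter_upwards [hhg] with t ht
  rw [hπ.map_map, add_comm, ht]
end

section
/- Let (X,π) be a semidynamical system on a metric space and let x ∈ X be asymptotically almost periodic, witnessed by an almost periodic point p ∈ X and a time reparametrization g with ρ(π(x,t), π(p,g(t))) → 0 as t → +∞. Then p ∈ P_x; in particular P_x is nonempty. -/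
/-!
An almost periodic point `p` returns arbitrarily close to itself at arbitrarily late times, so
`p ∈ L⁺(p)`. A time reparametrization `g` is a homeomorphism, so `g⁻¹` preserves the filter of
complements of compact sets and hence tends to infinity. Therefore `π x (g⁻¹ t)` is asymptotic
to `π p t`, and every positive limit point of `p`, in particular `p` itself, lies in `L⁺(x)`.
-/

open Filter Topology
open scoped NNReal

/-- `x` is an almost periodic point of the semidynamical system `π`. -/
def AlmostPer {Z : Type*} [MetricSpace Z] (π : Z → ℝ≥0 → Z) (x : Z) : Prop :=
  ∀ ε : ℝ, 0 < ε → ∃ T : ℝ≥0, 0 < T ∧ ∀ α : ℝ≥0, ∃ τ : ℝ≥0,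
    α ≤ τ ∧ τ ≤ α + T ∧ 0 < τ ∧ ∀ t : ℝ≥0, dist (π x (t + τ)) (π x t) < ε

lemma tendsto_homeomorph_atTop {α β : Type*} [TopologicalSpace α] [TopologicalSpace β]
    [LinearOrder α] [NoMaxOrder α] [ClosedIciTopology α]
    [LinearOrder β] [OrderBot β] [CompactIccSpace β] (e : α ≃ₜ β) :
    Tendsto e atTop atTop := by
  have he : Tendsto e (cocompact α) (cocompact β) := e.map_cocompact.le
  exact (he.mono_left atTop_le_cocompact).mono_right cocompact_le_atTop

section LimitSet

variable {Z : Type*} [MetricSpace Z] {π : Z → ℝ≥0 → Z} {x z p : Z}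

lemma mem_limitSet_iff_mapClusterPt : p ∈ limitSet π x ↔ MapClusterPt p atTop (π x) :=
  ⟨fun ⟨_, ht, hlim⟩ => hlim.mapClusterPt.of_comp ht, fun h =>
    let ⟨t, hlim, ht⟩ := h.exists_seq_tendsto
    ⟨t, ht, hlim⟩⟩

lemma limitSet_subset_of_tendsto_dist {h : ℝ≥0 → ℝ≥0} (hh : Tendsto h atTop atTop)
    (hdist : Tendsto (fun t => dist (π x (h t)) (π z t)) atTop (𝓝 0)) :
    limitSet π z ⊆ limitSet π x := by
  rintro q ⟨t, ht, hlim⟩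
  exact ⟨h ∘ t, hh.comp ht, (tendsto_iff_of_dist (hdist.comp ht)).2 hlim⟩

lemma AlmostPer.mem_limitSet (hp : AlmostPer π p) (h0 : π p 0 = p) : p ∈ limitSet π p := by
  rw [mem_limitSet_iff_mapClusterPt, Metric.nhds_basis_ball.mapClusterPt_iff_frequently]
  intro ε hε
  obtain ⟨T, -, hT⟩ := hp ε hε
  refine frequently_atTop.2 fun α => ?_
  obtain ⟨τ, hατ, -, -, hτ⟩ := hT α
  exact ⟨τ, hατ, by simpa only [Metric.mem_ball, zero_add, h0] using hτ 0⟩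

end LimitSet

/-- the almost periodic point witnessing asymptotic almost periodicity of `x`
belongs to `P_x`; in particular `P_x` is nonempty. -/
theorem stmt_9 {X : Type*} [MetricSpace X]
    (π : X → ℝ≥0 → X) (hπ : IsSDS π) (x p : X)
    (hp : AlmostPer π p) (g : ℝ≥0 ≃ₜ ℝ≥0) (hg0 : g 0 = 0)
    (hasymp : Tendsto (fun t : ℝ≥0 => dist (π x t) (π p (g t))) atTop (𝓝 0)) :
    p ∈ Pset π x ∧ (Pset π x).Nonempty := by
  have hpp : p ∈ limitSet π p := hp.mem_limitSet (hπ.2.1 p)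
  have hg : Tendsto g.symm atTop atTop := tendsto_homeomorph_atTop g.symm
  have hdist : Tendsto (fun t => dist (π x (g.symm t)) (π p t)) atTop (𝓝 0) := by
    simpa only [Function.comp_def, g.apply_symm_apply] using hasymp.comp hg
  have hpx : p ∈ limitSet π x := limitSet_subset_of_tendsto_dist hg hdist hpp
  have hmem : p ∈ Pset π x := ⟨hpx, hpp, g, hg0, hasymp⟩
  exact ⟨hmem, p, hmem⟩
end

section
/- Let (X,π) and (Y,σ) be semidynamical systems on metric spaces and let h : X → Y be a homomorphism, i.e. h is continuous and h(π(z,t)) = σ(h(z),t) for all z ∈ X and t ≥ 0. Let y ∈ Y and let x ∈ X satisfy h(x) = y and have cl(π⁺(x)) compact. Assume that for each point q ∈ L⁺(y) there is a unique p ∈ X with h(p) = q. Then x is comparable in limit with y: for every sequence (tₙ) in [0,∞) with tₙ → +∞ such that (σ(y,tₙ)) converges in Y, the sequence (π(x,tₙ)) converges in X. -/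
open Filter Topology
open scoped NNReal

/-!
A relatively compact trajectory converges along `t` as soon as all its cluster points along `t`
coincide. If the image under `h` converges to `q`, those cluster points are limit points of the
trajectory lying in the fibre of `h` over `q`, so injectivity of `h` on the limit set is enough.
-/

theorem eq_of_mapClusterPt_of_tendsto {ι Y : Type*} [TopologicalSpace Y] [T2Space Y]
    {l : Filter ι} {v : ι → Y} {p q : Y} (hp : MapClusterPt p l v) (hq : Tendsto v l (𝓝 q)) :
    p = q :=
  eq_of_nhds_neBot (hp.clusterPt.mono hq)

theorem mapClusterPt_comp_of_continuousWithinAt {ι X Y : Type*} [TopologicalSpace X]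
    [TopologicalSpace Y] {l : Filter ι} {u : ι → X} {K : Set X} {h : X → Y} {p : X}
    (hh : ContinuousWithinAt h K p) (hu : ∀ᶠ i in l, u i ∈ K) (hp : MapClusterPt p l u) :
    MapClusterPt (h p) l (h ∘ u) :=
  hp.tendsto_comp' (hh.mono_left (inf_le_inf_left _ (tendsto_principal.2 hu)))

theorem stmt_15_general {T ι X Y : Type*} [TopologicalSpace X] [TopologicalSpace Y] [T2Space Y]
    {F : Filter T} {φ : T → X} {K : Set X} {h : X → Y} (hK : IsCompact K)
    (hφ : ∀ᶠ s in F, φ s ∈ K) (hh : ContinuousOn h K)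
    (hinj : Set.InjOn h {p | MapClusterPt p F φ}) {l : Filter ι} [NeBot l] {t : ι → T}
    (ht : Tendsto t l F) (hlim : ∃ q, Tendsto (fun i ↦ h (φ (t i))) l (𝓝 q)) :
    ∃ p, Tendsto (fun i ↦ φ (t i)) l (𝓝 p) := by
  obtain ⟨q, hq⟩ := hlim
  have hmem : ∀ᶠ i in l, φ (t i) ∈ K := ht.eventually hφ
  have hfibre : ∀ p ∈ K, MapClusterPt p l (φ ∘ t) → h p = q := fun p hpK hp ↦
    eq_of_mapClusterPt_of_tendsto
      (mapClusterPt_comp_of_continuousWithinAt (hh p hpK) hmem hp) hq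
  obtain ⟨p, hpK, hp⟩ := hK.exists_mapClusterPt (tendsto_principal.2 hmem)
  refine ⟨p, hK.tendsto_nhds_of_unique_mapClusterPt hmem fun p' hp'K hp' ↦ ?_⟩
  exact hinj (hp'.of_comp ht) (hp.of_comp ht)
    ((hfibre p' hp'K hp').trans (hfibre p hpK hp).symm)

theorem limitSet_eq_setOf_mapClusterPt {Z : Type*} [MetricSpace Z] (π : Z → ℝ≥0 → Z) (x : Z) :
    limitSet π x = {p | MapClusterPt p atTop (π x)} := by
  ext p
  constructor
  · rintro ⟨t, ht, hp⟩
    exact MapClusterPt.of_comp ht hp.mapClusterPt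
  · intro hp
    obtain ⟨t, hp, ht⟩ := MapClusterPt.exists_seq_tendsto hp
    exact ⟨t, ht, hp⟩

theorem mapsTo_limitSet {X Y : Type*} [MetricSpace X] [MetricSpace Y] {π : X → ℝ≥0 → X}
    {σ : Y → ℝ≥0 → Y} {h : X → Y} {x : X} (hcont : Continuous h)
    (hhom : ∀ t, h (π x t) = σ (h x) t) :
    Set.MapsTo h (limitSet π x) (limitSet σ (h x)) := by
  rintro p ⟨t, ht, hp⟩
  refine ⟨t, ht, ?_⟩
  simpa only [Function.comp_def, hhom] using (hcont.tendsto p).comp hp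

theorem injOn_setOf_mapClusterPt_of_existsUnique {X Y : Type*} [MetricSpace X] [MetricSpace Y]
    {π : X → ℝ≥0 → X} {σ : Y → ℝ≥0 → Y} {h : X → Y} {x : X} (hcont : Continuous h)
    (hhom : ∀ t, h (π x t) = σ (h x) t) (huniq : ∀ q ∈ limitSet σ (h x), ∃! p, h p = q) :
    Set.InjOn h {p | MapClusterPt p atTop (π x)} := by
  rw [← limitSet_eq_setOf_mapClusterPt]
  intro p hp p' _ hpp'
  exact (huniq (h p) (mapsTo_limitSet hcont hhom hp)).unique rfl hpp'.symm

theorem stmt_15 {X Y : Type*} [MetricSpace X] [MetricSpace Y]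
    (π : X → ℝ≥0 → X) (σ : Y → ℝ≥0 → Y) (hπ : IsSDS π) (hσ : IsSDS σ)
    (h : X → Y) (hcont : Continuous h)
    (hhom : ∀ z : X, ∀ t : ℝ≥0, h (π z t) = σ (h z) t)
    (y : Y) (x : X) (hxy : h x = y)
    (hcpt : IsCompact (closure (Set.range (π x))))
    (huniq : ∀ q ∈ limitSet σ y, ∃! p : X, h p = q) :
    ∀ t : ℕ → ℝ≥0, Tendsto t atTop atTop →
      (∃ q : Y, Tendsto (fun n => σ y (t n)) atTop (𝓝 q)) →
      ∃ p : X, Tendsto (fun n => π x (t n)) atTop (𝓝 p) := by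
  subst hxy
  exact fun t ht hlim ↦ stmt_15_general hcpt (.of_forall fun s ↦ subset_closure ⟨s, rfl⟩)
    hcont.continuousOn (injOn_setOf_mapClusterPt_of_existsUnique hcont (hhom x) huniq) ht
    (by simpa only [hhom] using hlim)
end
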